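/- (Proposition 3.2 (i).) Let k, l be integers with k ≤ l < 2k and k ≥ 1. Let G = (V, E) be a multigraph, V_H ⊆ V with distinct A, B ∈ V_H, and suppose the induced subgraph H = (V_H, E_H) satisfies the renormalizability condition with respect to A, B. Then A and B are (k,l)-rigidly connected in G if and only if A and B are (k,l)-rigidly connected in R(G). -/

import Mathlib

/-!  Multigraphs: finite vertex set, finite multiset of edges (unordered pairs of
distinct vertices, parallel edges allowed, loops excluded). -/

/-- A multigraph on vertex type `V`: a finite set of vertices together with a
finite multiset of edges (unordered pairs of vertices). -/
structure MG (V : Type*) where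
  verts : Finset V
  edges : Multiset (Sym2 V)

namespace MG

variable {V : Type*} [DecidableEq V]

/-- Well-formedness: no loops, and every edge joins vertices of the graph. -/
def WF (G : MG V) : Prop :=
  (∀ e ∈ G.edges, ¬ e.IsDiag) ∧ (∀ e ∈ G.edges, e ∈ G.verts.sym2)

/-- `G'` is a subgraph of `G`: vertices a subset, edges a sub-multiset, and all
edges of `G'` join vertices of `G'`. -/
def IsSubgraph (G' G : MG V) : Prop :=
  G'.verts ⊆ G.verts ∧ G'.edges ≤ G.edges ∧ ∀ e ∈ G'.edges, e ∈ G'.verts.sym2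

/-- `(k,l)`-sparsity: every subgraph with `n > 1` vertices and `m` edges
satisfies `m ≤ k n - l`. -/
def Sparse (k l : ℤ) (G : MG V) : Prop :=
  ∀ G' : MG V, G'.IsSubgraph G → 1 < G'.verts.card →
    (Multiset.card G'.edges : ℤ) ≤ k * G'.verts.card - l

/-- `(k,l)`-redundant: not `(k,l)`-sparse. -/
def Redundant (k l : ℤ) (G : MG V) : Prop := ¬ Sparse k l G

/-- `(k,l)`-tight: sparse with exactly `k|V| - l` edges. -/
def Tight (k l : ℤ) (G : MG V) : Prop :=
  Sparse k l G ∧ (Multiset.card G.edges : ℤ) = k * G.verts.card - l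

/-- `A` and `B` are `(k,l)`-rigidly connected in `G` if some `(k,l)`-tight
subgraph of `G` contains both. -/
def RigidlyConnected (k l : ℤ) (G : MG V) (A B : V) : Prop :=
  ∃ T : MG V, T.IsSubgraph G ∧ Tight k l T ∧ A ∈ T.verts ∧ B ∈ T.verts

/-- `r_AB(H)`: the maximum of `|E_h| - k |V_h|` over all `(k,l)`-sparse
subgraphs `h` of `H` containing both `A` and `B`. -/
noncomputable def rAB (k l : ℤ) (H : MG V) (A B : V) : ℤ :=
  sSup {z : ℤ | ∃ h : MG V, h.IsSubgraph H ∧ Sparse k l h ∧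
    A ∈ h.verts ∧ B ∈ h.verts ∧ z = (Multiset.card h.edges : ℤ) - k * h.verts.card}

/-- `M_AB(H) = max (r_AB(H) + 2k, 0)`. -/
noncomputable def MAB (k l : ℤ) (H : MG V) (A B : V) : ℤ :=
  max (rAB k l H A B + 2 * k) 0

/-- The subgraph of `G` induced by a set `S` of vertices. -/
def induced (G : MG V) (S : Finset V) : MG V :=
  ⟨S, G.edges.filter (· ∈ S.sym2)⟩

/-- The intersection of `g` with the subgraph induced by `VH`: vertices
`g.verts ∩ VH` and the edges of `g` with both endpoints in `VH`. -/
def inter (g : MG V) (VH : Finset V) : MG V :=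
  ⟨g.verts ∩ VH, g.edges.filter (· ∈ VH.sym2)⟩

/-- The renormalizability condition: every edge of `G` with exactly one
endpoint in `VH` is incident to `A` or `B`. -/
def RenormCond (G : MG V) (VH : Finset V) (A B : V) : Prop :=
  ∀ e ∈ G.edges, (∃ v ∈ e, v ∈ VH) → (∃ v ∈ e, v ∉ VH) → (A ∈ e ∨ B ∈ e)

/-- The renormalized graph `R(G)`: delete all edges with both endpoints in
`VH`, delete the vertices of `VH` other than `A, B`, and insert
`M_AB(H)` parallel edges between `A` and `B`, where `H` is the subgraph
induced by `VH`. -/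
noncomputable def renormG (k l : ℤ) (G : MG V) (VH : Finset V) (A B : V) : MG V :=
  ⟨(G.verts \ VH) ∪ {A, B},
   G.edges.filter (fun e => e ∉ VH.sym2) +
     Multiset.replicate (MAB k l (G.induced VH) A B).toNat s(A, B)⟩

/-- Renormalization of a subgraph `g` of `G`: the part of `g` outside `VH` is
left unchanged, and its intersection `h` with the subgraph induced by `VH` is
replaced by `M_AB(h)` parallel `A`–`B` edges if both `A` and `B` belong to `g`,
and by no edges otherwise. -/
noncomputable def renormSub (k l : ℤ) (g : MG V) (VH : Finset V) (A B : V) : MG V :=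
  ⟨(g.verts \ VH) ∪ (g.verts ∩ {A, B}),
   g.edges.filter (fun e => e ∉ VH.sym2) +
     (if A ∈ g.verts ∧ B ∈ g.verts then
        Multiset.replicate (MAB k l (g.inter VH) A B).toNat s(A, B)
      else 0)⟩

/-- The maximum cardinality of a sub-multiset `E'` of the edges of `G` such
that `(V, E')` is `(k,l)`-sparse. -/
noncomputable def maxSparseCard (k l : ℤ) (G : MG V) : ℕ :=
  sSup {n : ℕ | ∃ E' : Multiset (Sym2 V), E' ≤ G.edges ∧
    Sparse k l (⟨G.verts, E'⟩ : MG V) ∧ Multiset.card E' = n}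

/-- The number of `(k,l)`-redundant edges of `G`. -/
noncomputable def nred (k l : ℤ) (G : MG V) : ℕ :=
  Multiset.card G.edges - maxSparseCard k l G

/-- Connectivity: any two vertices are joined by a path of edges. -/
def Connected (G : MG V) : Prop :=
  ∀ a ∈ G.verts, ∀ b ∈ G.verts,
    Relation.ReflTransGen (fun x y => s(x, y) ∈ G.edges) a b

end MG

/-!
Cut `G` along `{A, B}` into an outer part `O` and the induced subgraph `H`; then `R(G)` is the same
`O` with a bundle of parallel edges in place of `H`. A subgraph of a gluing along `{A, B}` that
contains both vertices is a gluing of subgraphs, and its surplus `|E| - k|V|` is, up to `2k`, the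
sum of their surpluses. So in a tight subgraph the piece inside `H` can be exchanged for any sparse
piece of the same surplus none of whose subgraphs through `A`, `B` has a larger one; subgraphs
missing `A` or `B` are cut along at most one vertex, which costs only `k ≤ l`. Such a piece arises
from any sparse piece of at least the required surplus by discarding edges. Hence only `r_AB`
matters, and the bundle is chosen to have the same `r_AB` as `H`.
-/

namespace MG

section Surplus

variable {V : Type*} {k l z : ℤ} {g h G H : MG V} {A B : V}

theorem IsSubgraph.trans (hgh : g.IsSubgraph h) (hhG : h.IsSubgraph G) : g.IsSubgraph G :=
  ⟨hgh.1.trans hhG.1, hgh.2.1.trans hhG.2.1, hgh.2.2⟩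

theorem IsSubgraph.self (hg : g.IsSubgraph G) : g.IsSubgraph g :=
  ⟨subset_rfl, le_rfl, hg.2.2⟩

theorem WF.isSubgraph_self (hG : G.WF) : G.IsSubgraph G :=
  ⟨subset_rfl, le_rfl, hG.2⟩

theorem IsSubgraph.wf (hg : g.IsSubgraph G) (hG : G.WF) : g.WF :=
  ⟨fun e he => hG.1 e (Multiset.mem_of_le hg.2.1 he), hg.2.2⟩

theorem Sparse.of_isSubgraph (hG : Sparse k l G) (hg : g.IsSubgraph G) : Sparse k l g :=
  fun _ hf => hG _ (hf.trans hg)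

theorem WF.edges_eq_zero_of_card_le_one (hG : G.WF) (hcard : G.verts.card ≤ 1) : G.edges = 0 := by
  refine Multiset.eq_zero_of_forall_notMem fun e he => ?_
  have hends := hG.2 e he
  have hloop := hG.1 e he
  induction e using Sym2.ind with
  | _ x y =>
    rw [Finset.mk_mem_sym2_iff] at hends
    exact hloop (Finset.card_le_one.1 hcard x hends.1 y hends.2)

/-- The surplus `|E| - k|V|`, the quantity maximised by `rAB`. A graph is `(k,l)`-sparse when all
its subgraphs on at least two vertices have surplus at most `-l`, and tight when, moreover, its own
surplus is `-l`. -/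
def surplus (k : ℤ) (G : MG V) : ℤ :=
  (Multiset.card G.edges : ℤ) - k * G.verts.card

theorem sparse_iff_surplus_le :
    Sparse k l G ↔ ∀ g : MG V, g.IsSubgraph G → 1 < g.verts.card → surplus k g ≤ -l := by
  refine forall₃_congr fun g _ _ => ?_
  rw [surplus]
  constructor <;> intro h <;> linarith

theorem tight_iff_surplus_eq : Tight k l G ↔ Sparse k l G ∧ surplus k G = -l := by
  refine and_congr_right fun _ => ?_
  rw [surplus]
  constructor <;> intro h <;> linarith

theorem Sparse.surplus_add_mul_card_nonpos (hG : Sparse k l G) (hWF : G.WF) (hk : 0 ≤ k)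
    (hkl : k ≤ l) {C : Finset V} (hC : C ⊆ G.verts) (hcard : C.card ≤ 1) :
    surplus k G + k * C.card ≤ 0 := by
  rcases le_or_gt G.verts.card 1 with hle | hlt
  · have hCG : k * C.card ≤ k * G.verts.card :=
      mul_le_mul_of_nonneg_left (mod_cast Finset.card_le_card hC) hk
    rw [surplus, hWF.edges_eq_zero_of_card_le_one hle, Multiset.card_zero]
    push_cast
    linarith
  · have hsurplus := sparse_iff_surplus_le.1 hG G hWF.isSubgraph_self hlt
    have hCk : k * C.card ≤ k := mul_le_of_le_one_right hk (mod_cast hcard)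
    linarith

/-- Edges are discarded one at a time, always inside a subgraph of too large surplus. -/
theorem exists_isSubgraph_surplus_eq (hk : 0 ≤ k) (hG : G.IsSubgraph G) {C : Finset V}
    (hC : C ⊆ G.verts) (hCz : -(k * C.card) ≤ z) (hz : z ≤ surplus k G) :
    ∃ h : MG V, h.IsSubgraph G ∧ C ⊆ h.verts ∧ surplus k h = z ∧
      ∀ g : MG V, g.IsSubgraph h → C ⊆ g.verts → surplus k g ≤ z := by
  classical
  induction hn : Multiset.card G.edges using Nat.strong_induction_on generalizing G with
  | _ n ih =>
    by_cases hmax : ∀ g : MG V, g.IsSubgraph G → C ⊆ g.verts → surplus k g ≤ z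
    · exact ⟨G, hG, hC, le_antisymm (hmax G hG hC) hz, hmax⟩
    push Not at hmax
    obtain ⟨g, hgG, hCg, hzg⟩ := hmax
    have hpos : 0 < Multiset.card g.edges := by
      have hcard : k * C.card ≤ k * g.verts.card :=
        mul_le_mul_of_nonneg_left (mod_cast Finset.card_le_card hCg) hk
      rw [surplus] at hzg
      lia
    obtain ⟨e, he⟩ := Multiset.card_pos_iff_exists_mem.1 hpos
    have herase := Multiset.card_erase_add_one he
    let g' : MG V := ⟨g.verts, g.edges.erase e⟩
    have hg'G : g'.IsSubgraph G :=
      ⟨hgG.1, (Multiset.erase_le _ _).trans hgG.2.1,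
        fun x hx => hgG.2.2 x (Multiset.mem_of_mem_erase hx)⟩
    have hzg' : z ≤ surplus k g' := by
      simp only [surplus, g'] at hzg ⊢
      lia
    have hlt : Multiset.card g'.edges < n := by
      have := Multiset.card_le_card hgG.2.1
      simp only [g']
      lia
    obtain ⟨h, hh, hrest⟩ := ih _ hlt hg'G.self hCg hzg' rfl
    exact ⟨h, hh.trans hg'G, hrest⟩

theorem bddAbove_surplus_of_sparse (hAB : A ≠ B) :
    BddAbove {z : ℤ | ∃ h : MG V, h.IsSubgraph H ∧ Sparse k l h ∧
      A ∈ h.verts ∧ B ∈ h.verts ∧ z = surplus k h} := by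
  refine ⟨-l, ?_⟩
  rintro _ ⟨h, hH, hs, hA, hB, rfl⟩
  exact sparse_iff_surplus_le.1 hs h hH.self (Finset.one_lt_card.2 ⟨A, hA, B, hB, hAB⟩)

theorem Sparse.surplus_le_rAB (hs : Sparse k l h) (hH : h.IsSubgraph H) (hA : A ∈ h.verts)
    (hB : B ∈ h.verts) (hAB : A ≠ B) : surplus k h ≤ rAB k l H A B :=
  le_csSup (bddAbove_surplus_of_sparse hAB) ⟨h, hH, hs, hA, hB, rfl⟩

end Surplus

section Dipole

variable {V : Type*} [DecidableEq V] {k l : ℤ} {n : ℕ} {g H : MG V} {A B : V}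

/-- The dipole graph: two vertices `A`, `B` joined by `n` parallel edges. This is what
renormalization puts in place of `H`. -/
def dipole (n : ℕ) (A B : V) : MG V :=
  ⟨{A, B}, Multiset.replicate n s(A, B)⟩

theorem wf_dipole (hAB : A ≠ B) : (dipole n A B).WF := by
  constructor <;> intro e he <;> rw [Multiset.eq_of_mem_replicate he] <;> simp [dipole, hAB]

theorem dipole_zero_isSubgraph (hA : A ∈ H.verts) (hB : B ∈ H.verts) :
    (dipole 0 A B).IsSubgraph H := by
  simp [IsSubgraph, dipole, Finset.insert_subset_iff, hA, hB]

theorem surplus_dipole (hAB : A ≠ B) : surplus k (dipole n A B) = n - 2 * k := by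
  simp [surplus, dipole, Finset.card_pair hAB, mul_comm]

theorem IsSubgraph.surplus_le_of_dipole (hg : g.IsSubgraph (dipole n A B))
    (hcard : 1 < g.verts.card) : surplus k g ≤ n - 2 * k := by
  have hverts : g.verts.card = 2 :=
    le_antisymm ((Finset.card_le_card hg.1).trans Finset.card_le_two) hcard
  have hedges : Multiset.card g.edges ≤ n := by
    simpa only [dipole, Multiset.card_replicate] using Multiset.card_le_card hg.2.1
  rw [surplus, hverts]
  push_cast
  linarith

theorem sparse_dipole (hn : n ≤ 2 * k - l) : Sparse k l (dipole n A B) :=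
  sparse_iff_surplus_le.2 fun _ hg hcard => (hg.surplus_le_of_dipole hcard).trans (by linarith)

end Dipole

section Extremal

variable {V : Type*} {k l : ℤ} {n : ℕ} {H : MG V} {A B : V}

theorem exists_surplus_eq_rAB (hl2k : l ≤ 2 * k) (hAB : A ≠ B) (hA : A ∈ H.verts)
    (hB : B ∈ H.verts) :
    ∃ h : MG V, h.IsSubgraph H ∧ Sparse k l h ∧ A ∈ h.verts ∧ B ∈ h.verts ∧
      rAB k l H A B = surplus k h := by
  classical
  refine Int.csSup_mem ?_ (bddAbove_surplus_of_sparse hAB)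
  exact ⟨_, dipole 0 A B, dipole_zero_isSubgraph hA hB, sparse_dipole (by simpa using hl2k),
    by simp [dipole], by simp [dipole], rfl⟩

theorem neg_two_mul_le_rAB (hl2k : l ≤ 2 * k) (hAB : A ≠ B) (hA : A ∈ H.verts)
    (hB : B ∈ H.verts) : -(2 * k) ≤ rAB k l H A B := by
  classical
  have hsparse : Sparse k l (dipole 0 A B) := sparse_dipole (by simpa using hl2k)
  simpa [surplus_dipole hAB] using
    hsparse.surplus_le_rAB (dipole_zero_isSubgraph hA hB) (by simp [dipole]) (by simp [dipole]) hAB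

theorem rAB_le_neg (hl2k : l ≤ 2 * k) (hAB : A ≠ B) (hA : A ∈ H.verts) (hB : B ∈ H.verts) :
    rAB k l H A B ≤ -l := by
  obtain ⟨h, hH, hs, hAh, hBh, hr⟩ := exists_surplus_eq_rAB hl2k hAB hA hB
  rw [hr]
  exact sparse_iff_surplus_le.1 hs h hH.self (Finset.one_lt_card.2 ⟨A, hAh, B, hBh, hAB⟩)

theorem exists_sparse_surplus_eq [DecidableEq V] (hk : 0 ≤ k) (hl2k : l ≤ 2 * k) (hAB : A ≠ B)
    (hH : {A, B} ⊆ H.verts) {z : ℤ} (hz : -(2 * k) ≤ z) (hzr : z ≤ rAB k l H A B) :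
    ∃ h : MG V, h.IsSubgraph H ∧ Sparse k l h ∧ {A, B} ⊆ h.verts ∧ surplus k h = z ∧
      ∀ g : MG V, g.IsSubgraph h → {A, B} ⊆ g.verts → surplus k g ≤ z := by
  obtain ⟨hA, hB⟩ : A ∈ H.verts ∧ B ∈ H.verts := by
    rwa [Finset.insert_subset_iff, Finset.singleton_subset_iff] at hH
  obtain ⟨m, hm, hms, hAm, hBm, hmr⟩ := exists_surplus_eq_rAB hl2k hAB hA hB
  obtain ⟨h, hh, hABh, hhz, hmax⟩ := exists_isSubgraph_surplus_eq hk hm.self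
    (Finset.insert_subset hAm (Finset.singleton_subset_iff.2 hBm))
    (by rw [Finset.card_pair hAB]; push_cast; linarith) (hzr.trans_eq hmr)
  exact ⟨h, hh.trans hm, hms.of_isSubgraph hh, hABh, hhz, hmax⟩

theorem rAB_dipole [DecidableEq V] (hAB : A ≠ B) (hn : n ≤ 2 * k - l) :
    rAB k l (dipole n A B) A B = n - 2 * k := by
  apply le_antisymm
  · obtain ⟨h, hH, -, hA, hB, hr⟩ := exists_surplus_eq_rAB (H := dipole n A B)
      (by linarith : l ≤ 2 * k) hAB (by simp [dipole]) (by simp [dipole])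
    rw [hr]
    exact hH.surplus_le_of_dipole (Finset.one_lt_card.2 ⟨A, hA, B, hB, hAB⟩)
  · rw [← surplus_dipole hAB]
    exact (sparse_dipole hn).surplus_le_rAB (wf_dipole hAB).isSubgraph_self
      (by simp [dipole]) (by simp [dipole]) hAB

theorem rAB_dipole_MAB [DecidableEq V] (hl2k : l ≤ 2 * k) (hAB : A ≠ B) (hA : A ∈ H.verts)
    (hB : B ∈ H.verts) :
    rAB k l (dipole (MAB k l H A B).toNat A B) A B = rAB k l H A B := by
  have hM : MAB k l H A B = rAB k l H A B + 2 * k :=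
    max_eq_left (by linarith [neg_two_mul_le_rAB hl2k hAB hA hB])
  have hcast : ((MAB k l H A B).toNat : ℤ) = rAB k l H A B + 2 * k :=
    (Int.toNat_of_nonneg (le_max_right _ _)).trans hM
  rw [rAB_dipole hAB (by linarith [rAB_le_neg hl2k hAB hA hB]), hcast, add_sub_cancel_right]

end Extremal

section Glue

variable {V : Type*} [DecidableEq V] {k l : ℤ} {g h o H H' O : MG V} {C : Finset V} {A B : V}

/-- The union of two multigraphs, identifying common vertices but keeping the edges of both
apart, so that multiplicities add up. -/
def glue (O H : MG V) : MG V :=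
  ⟨O.verts ∪ H.verts, O.edges + H.edges⟩

theorem surplus_glue :
    surplus k (glue O H) = surplus k O + surplus k H + k * (O.verts ∩ H.verts).card := by
  have hcard : ((O.verts ∪ H.verts).card : ℤ) + (O.verts ∩ H.verts).card =
      O.verts.card + H.verts.card := mod_cast Finset.card_union_add_card_inter _ _
  simp only [surplus, glue, Multiset.card_add]
  push_cast
  linear_combination -k * hcard

theorem WF.isSubgraph_glue_left (hO : O.WF) : O.IsSubgraph (glue O H) :=
  ⟨Finset.subset_union_left, Multiset.le_add_right _ _, hO.2⟩

theorem WF.isSubgraph_glue_right (hH : H.WF) : H.IsSubgraph (glue O H) :=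
  ⟨Finset.subset_union_right, Multiset.le_add_left _ _, hH.2⟩

theorem glue_isSubgraph_glue (ho : o.IsSubgraph O) (hh : h.IsSubgraph H) :
    (glue o h).IsSubgraph (glue O H) := by
  refine ⟨Finset.union_subset_union ho.1 hh.1, add_le_add ho.2.1 hh.2.1, fun e he => ?_⟩
  rcases Multiset.mem_add.1 he with he | he
  · exact Finset.sym2_mono Finset.subset_union_left (ho.2.2 e he)
  · exact Finset.sym2_mono Finset.subset_union_right (hh.2.2 e he)

theorem IsSubgraph.exists_eq_glue (hg : g.IsSubgraph (glue O H)) (hO : O.WF) (hH : H.WF) :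
    ∃ o h : MG V, o.IsSubgraph O ∧ h.IsSubgraph H ∧ o.verts = g.verts ∩ O.verts ∧
      h.verts = g.verts ∩ H.verts ∧ g = glue o h := by
  obtain ⟨hverts, hedges, hends⟩ := hg
  have hsub : ∀ {E : Multiset (Sym2 V)} {K : MG V}, K.WF → E ≤ g.edges → E ≤ K.edges →
      (⟨g.verts ∩ K.verts, E⟩ : MG V).IsSubgraph K := fun hK hEg hEK =>
    ⟨Finset.inter_subset_right, hEK, fun e he => Finset.mem_sym2_iff.2 fun a ha =>
      Finset.mem_inter.2 ⟨Finset.mem_sym2_iff.1 (hends e (Multiset.mem_of_le hEg he)) a ha,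
        Finset.mem_sym2_iff.1 (hK.2 e (Multiset.mem_of_le hEK he)) a ha⟩⟩
  refine ⟨⟨g.verts ∩ O.verts, g.edges ∩ O.edges⟩, ⟨g.verts ∩ H.verts, g.edges - O.edges⟩,
    hsub hO Multiset.inter_le_left Multiset.inter_le_right,
    hsub hH tsub_le_self (tsub_le_iff_left.2 hedges), rfl, rfl, ?_⟩
  have hV : g.verts = g.verts ∩ O.verts ∪ g.verts ∩ H.verts := by
    rw [← Finset.inter_union_distrib_left]
    exact (Finset.inter_eq_left.2 hverts).symm
  have hE : g.edges = g.edges ∩ O.edges + (g.edges - O.edges) := by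
    rw [add_comm, Multiset.sub_add_inter]
  cases g
  exact congrArg₂ MG.mk hV hE

theorem IsSubgraph.verts_inter_eq (ho : o.IsSubgraph O) (hh : h.IsSubgraph H)
    (hOH : O.verts ∩ H.verts = C) (hCo : C ⊆ o.verts) (hCh : C ⊆ h.verts) :
    o.verts ∩ h.verts = C :=
  (hOH ▸ Finset.inter_subset_inter ho.1 hh.1).antisymm (Finset.subset_inter hCo hCh)

theorem IsSubgraph.exists_eq_glue_of_subset (hg : g.IsSubgraph (glue O H)) (hO : O.WF) (hH : H.WF)
    (hOH : O.verts ∩ H.verts = C) (hC : C ⊆ g.verts) :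
    ∃ o h : MG V, o.IsSubgraph O ∧ h.IsSubgraph H ∧ C ⊆ o.verts ∧ C ⊆ h.verts ∧
      o.verts ∩ h.verts = C ∧ g = glue o h := by
  obtain ⟨o, h, ho, hh, hov, hhv, hgoh⟩ := hg.exists_eq_glue hO hH
  have hCo : C ⊆ o.verts := hov ▸ Finset.subset_inter hC (hOH ▸ Finset.inter_subset_left)
  have hCh : C ⊆ h.verts := hhv ▸ Finset.subset_inter hC (hOH ▸ Finset.inter_subset_right)
  exact ⟨o, h, ho, hh, hCo, hCh, ho.verts_inter_eq hh hOH hCo hCh, hgoh⟩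

theorem Sparse.surplus_glue_le (hO : Sparse k l O) (hH : Sparse k l H) (hOWF : O.WF) (hHWF : H.WF)
    (hkl : k ≤ l) (hl2k : l ≤ 2 * k) (hinter : (O.verts ∩ H.verts).card ≤ 1)
    (hcard : 1 < (glue O H).verts.card) : surplus k (glue O H) ≤ -l := by
  have hk : 0 ≤ k := by linarith
  have hsurplus : ∀ {K : MG V}, Sparse k l K → K.WF → 1 < K.verts.card → surplus k K ≤ -l :=
    fun hK hWF => sparse_iff_surplus_le.1 hK _ hWF.isSubgraph_self
  rw [surplus_glue]
  rcases lt_or_ge 1 O.verts.card with hOc | hOc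
  · linarith [hsurplus hO hOWF hOc,
      hH.surplus_add_mul_card_nonpos hHWF hk hkl Finset.inter_subset_right hinter]
  rcases lt_or_ge 1 H.verts.card with hHc | hHc
  · linarith [hsurplus hH hHWF hHc,
      hO.surplus_add_mul_card_nonpos hOWF hk hkl Finset.inter_subset_left hinter]
  have hverts : k * 2 ≤ k * (glue O H).verts.card :=
    mul_le_mul_of_nonneg_left (mod_cast hcard) hk
  rw [← surplus_glue]
  simp only [surplus, glue, hOWF.edges_eq_zero_of_card_le_one hOc,
    hHWF.edges_eq_zero_of_card_le_one hHc, add_zero, Multiset.card_zero] at hverts ⊢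
  push_cast
  linarith

theorem Sparse.glue_of_surplus_le (hs : Sparse k l (glue O H)) (hs' : Sparse k l H') (hO : O.WF)
    (hH : H.WF) (hH' : H'.WF) (hkl : k ≤ l) (hl2k : l ≤ 2 * k) (hC : C.card = 2)
    (hOH : O.verts ∩ H.verts = C) (hOH' : O.verts ∩ H'.verts = C)
    (hle : ∀ g : MG V, g.IsSubgraph H' → C ⊆ g.verts → surplus k g ≤ surplus k H) :
    Sparse k l (glue O H') := by
  have hsO : Sparse k l O := hs.of_isSubgraph hO.isSubgraph_glue_left
  rw [sparse_iff_surplus_le] at hs ⊢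
  intro g hg hcard
  by_cases hCg : C ⊆ g.verts
  · obtain ⟨o, h, ho, hh, hCo, hCh, hoh, rfl⟩ := hg.exists_eq_glue_of_subset hO hH' hOH' hCg
    have hoH : o.verts ∩ H.verts = C :=
      ho.verts_inter_eq hH.isSubgraph_self hOH hCo (hOH ▸ Finset.inter_subset_right)
    have hcard' : 1 < (glue o H).verts.card :=
      hC.ge.trans (Finset.card_le_card (hCo.trans Finset.subset_union_left))
    calc surplus k (glue o h)
        = surplus k o + surplus k h + k * C.card := by rw [surplus_glue, hoh]
      _ ≤ surplus k o + surplus k H + k * C.card := by gcongr; exact hle h hh hCh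
      _ = surplus k (glue o H) := by rw [surplus_glue, hoH]
      _ ≤ -l := hs _ (glue_isSubgraph_glue ho hH.isSubgraph_self) hcard'
  · obtain ⟨o, h, ho, hh, hov, hhv, hgoh⟩ := hg.exists_eq_glue hO hH'
    have hinter : o.verts ∩ h.verts = g.verts ∩ C := by
      rw [hov, hhv, ← Finset.inter_inter_distrib_left, hOH']
    have hlt : (g.verts ∩ C).card < C.card :=
      Finset.card_lt_card (Finset.inter_subset_right.ssubset_of_ne (hCg ∘ Finset.inter_eq_right.1))
    rw [hgoh] at hcard ⊢
    exact (hsO.of_isSubgraph ho).surplus_glue_le (hs'.of_isSubgraph hh) (ho.wf hO) (hh.wf hH') hkl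
      hl2k (by rw [hinter]; lia) hcard

theorem Tight.neg_le_surplus_of_glue (hT : Tight k l (glue O H)) (hO : O.WF) (hC : C.card = 2)
    (hOH : O.verts ∩ H.verts = C) : -(2 * k) ≤ surplus k H := by
  obtain ⟨hs, htight⟩ := tight_iff_surplus_eq.1 hT
  have hcard : 1 < O.verts.card :=
    hC.ge.trans (Finset.card_le_card (hOH ▸ Finset.inter_subset_left))
  have hO_le : surplus k O ≤ -l := sparse_iff_surplus_le.1 hs O hO.isSubgraph_glue_left hcard
  rw [surplus_glue, hOH, hC] at htight
  push_cast at htight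
  linarith

theorem RigidlyConnected.glue_of_rAB_le (hrigid : RigidlyConnected k l (glue O H) A B)
    (hO : O.WF) (hH : H.WF) (hH' : H'.WF) (hkl : k ≤ l) (hl2k : l ≤ 2 * k) (hAB : A ≠ B)
    (hOH : O.verts ∩ H.verts = {A, B}) (hOH' : O.verts ∩ H'.verts = {A, B})
    (hr : rAB k l H A B ≤ rAB k l H' A B) : RigidlyConnected k l (glue O H') A B := by
  obtain ⟨T, hT, hTtight, hAT, hBT⟩ := hrigid
  have hAB2 : ({A, B} : Finset V).card = 2 := Finset.card_pair hAB
  obtain ⟨o, t, ho, ht, hABo, hABt, hot, rfl⟩ := hT.exists_eq_glue_of_subset hO hH hOH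
    (Finset.insert_subset hAT (Finset.singleton_subset_iff.2 hBT))
  obtain ⟨hs, htight⟩ := tight_iff_surplus_eq.1 hTtight
  have hlow : -(2 * k) ≤ surplus k t := hTtight.neg_le_surplus_of_glue (ho.wf hO) hAB2 hot
  have hupp : surplus k t ≤ rAB k l H A B := by
    rw [Finset.insert_subset_iff, Finset.singleton_subset_iff] at hABt
    exact (hs.of_isSubgraph (ht.wf hH).isSubgraph_glue_right).surplus_le_rAB ht hABt.1 hABt.2 hAB
  obtain ⟨h, hh, hhs, hABh, hht, hmax⟩ := exists_sparse_surplus_eq (by linarith) hl2k hAB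
    (hOH' ▸ Finset.inter_subset_right) hlow (hupp.trans hr)
  have hoh : o.verts ∩ h.verts = {A, B} := ho.verts_inter_eq hh hOH' hABo hABh
  have hsparse : Sparse k l (glue o h) := hs.glue_of_surplus_le hhs (ho.wf hO) (ht.wf hH)
    (hh.wf hH') hkl hl2k hAB2 hot hoh (hht ▸ hmax)
  have hsurplus : surplus k (glue o h) = -l := by
    rw [surplus_glue, hoh, hht, ← hot, ← surplus_glue, htight]
  rw [Finset.insert_subset_iff, Finset.singleton_subset_iff] at hABo
  exact ⟨glue o h, glue_isSubgraph_glue ho hh, tight_iff_surplus_eq.2 ⟨hsparse, hsurplus⟩,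
    Finset.mem_union_left _ hABo.1, Finset.mem_union_left _ hABo.2⟩

end Glue

section Renormalization

variable {V : Type*} [DecidableEq V] {k l : ℤ} {G : MG V} {VH : Finset V} {A B : V}

theorem WF.induced (hG : G.WF) : (G.induced VH).WF :=
  ⟨fun e he => hG.1 e (Multiset.mem_of_mem_filter he), fun _ he => (Multiset.mem_filter.1 he).2⟩

/-- The part of `G` left unchanged by renormalization: the vertices outside `VH` together with
`A` and `B`, and the edges not contained in `VH`. -/
def outer (G : MG V) (VH : Finset V) (A B : V) : MG V :=
  ⟨(G.verts \ VH) ∪ {A, B}, G.edges.filter (· ∉ VH.sym2)⟩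

theorem RenormCond.wf_outer (hren : RenormCond G VH A B) (hG : G.WF) (hA : A ∈ VH) (hB : B ∈ VH) :
    (G.outer VH A B).WF := by
  refine ⟨fun e he => hG.1 e (Multiset.mem_of_mem_filter he), fun e he => ?_⟩
  obtain ⟨heG, heVH⟩ := Multiset.mem_filter.1 he
  have hends := Finset.mem_sym2_iff.1 (hG.2 e heG)
  obtain ⟨b, hb, hbVH⟩ : ∃ b ∈ e, b ∉ VH := by simpa [Finset.mem_sym2_iff] using heVH
  refine Finset.mem_sym2_iff.2 fun a ha => ?_
  by_cases haVH : a ∈ VH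
  · have he_eq : e = s(a, b) :=
      (Sym2.mem_and_mem_iff (ne_of_mem_of_not_mem haVH hbVH)).1 ⟨ha, hb⟩
    have hAa : A ∈ e → a = A := by
      rw [he_eq, Sym2.mem_iff]
      rintro (rfl | rfl)
      exacts [rfl, absurd hA hbVH]
    have hBa : B ∈ e → a = B := by
      rw [he_eq, Sym2.mem_iff]
      rintro (rfl | rfl)
      exacts [rfl, absurd hB hbVH]
    have haAB : a = A ∨ a = B := (hren e heG ⟨a, ha, haVH⟩ ⟨b, hb, hbVH⟩).imp hAa hBa
    exact Finset.mem_union_right _ (by simpa using haAB)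
  · exact Finset.mem_union_left _ (Finset.mem_sdiff.2 ⟨hends a ha, haVH⟩)

theorem outer_verts_inter_induced_verts (hA : A ∈ VH) (hB : B ∈ VH) :
    (G.outer VH A B).verts ∩ (G.induced VH).verts = {A, B} := by
  have hAB : {A, B} ⊆ VH := by simp [Finset.insert_subset_iff, hA, hB]
  rw [outer, induced, Finset.union_inter_distrib_right, Finset.sdiff_inter_self,
    Finset.empty_union, Finset.inter_eq_left.2 hAB]

theorem outer_verts_inter_dipole_verts {n : ℕ} :
    (G.outer VH A B).verts ∩ (dipole n A B).verts = {A, B} :=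
  Finset.inter_eq_right.2 Finset.subset_union_right

theorem glue_outer_induced (hVH : VH ⊆ G.verts) (hA : A ∈ VH) (hB : B ∈ VH) :
    glue (G.outer VH A B) (G.induced VH) = G := by
  have hAB : {A, B} ⊆ VH := by simp [Finset.insert_subset_iff, hA, hB]
  have hV : G.verts \ VH ∪ {A, B} ∪ VH = G.verts := by
    rw [Finset.union_assoc, Finset.union_eq_right.2 hAB, Finset.sdiff_union_of_subset hVH]
  have hE : G.edges.filter (· ∉ VH.sym2) + G.edges.filter (· ∈ VH.sym2) = G.edges := by
    rw [add_comm, Multiset.filter_add_not]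
  cases G
  exact congrArg₂ MG.mk hV hE

theorem glue_outer_dipole :
    glue (G.outer VH A B) (dipole (MAB k l (G.induced VH) A B).toNat A B) =
      renormG k l G VH A B := by
  rw [glue, outer, dipole, renormG, Finset.union_assoc, Finset.union_self]

end Renormalization

end MG

/-- Proposition 3.2 (i): let `H`, the subgraph of `G` induced by `VH`,
satisfy the renormalizability condition w.r.t. `A, B`. Then `A` and `B` are
`(k,l)`-rigidly connected in `G` if and only if they are in `R(G)`. -/
theorem rigidlyConnected_renorm_iff {V : Type*} [DecidableEq V] (k l : ℤ)
    (hk : 1 ≤ k) (hkl : k ≤ l) (hl2k : l < 2 * k)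
    (G : MG V) (hWF : G.WF) (VH : Finset V) (hVH : VH ⊆ G.verts)
    (A B : V) (hA : A ∈ VH) (hB : B ∈ VH) (hAB : A ≠ B)
    (hren : MG.RenormCond G VH A B) :
    MG.RigidlyConnected k l G A B ↔
      MG.RigidlyConnected k l (MG.renormG k l G VH A B) A B := by
  have hO : (G.outer VH A B).WF := hren.wf_outer hWF hA hB
  have hH : (G.induced VH).WF := hWF.induced
  have hOH := MG.outer_verts_inter_induced_verts (G := G) hA hB
  have hr := MG.rAB_dipole_MAB (H := G.induced VH) hl2k.le hAB hA hB
  rw [← MG.glue_outer_dipole]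
  nth_rw 1 [← MG.glue_outer_induced hVH hA hB]
  exact ⟨fun h => h.glue_of_rAB_le hO hH (MG.wf_dipole hAB) hkl hl2k.le hAB hOH
      MG.outer_verts_inter_dipole_verts hr.ge,
    fun h => h.glue_of_rAB_le hO (MG.wf_dipole hAB) hH hkl hl2k.le hAB
      MG.outer_verts_inter_dipole_verts hOH hr.le⟩
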